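/- Let p ≥ 2 be an integer and let k > 1 be an integer, k = 3m + r with r ∈ {0,1,2}. Then, modulo densities in Ω_k + Θ_k, one has: Ĩ*_{k,1}(u) ≡ 2 𝓘_{k,0}(u) − 2(p−1) 𝓘_{k,1}(u) and Ṽ*_{k,1}(u) ≡ 4p 𝓥_{k,0}(u). Moreover, for k > 2, W̃*_{k,1}(u) ≡ 2 𝓥_{k,0}(u) − 2 𝓦_{k,0}(u) − 2 𝓥_{k,1}(u). -/

import Mathlib

open MeasureTheory
open scoped Real BigOperators ENNReal

noncomputable section

/-- `n`-th spatial derivative. -/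
def pD (n : ℕ) (f : ℝ → ℂ) : ℝ → ℂ := iteratedDeriv n f

/-- Complex conjugate of the `n`-th spatial derivative. -/
def cD (n : ℕ) (f : ℝ → ℂ) (x : ℝ) : ℂ := (starRingEnd ℂ) (iteratedDeriv n f x)

/-- Integral over one period of the torus `𝕋 = ℝ/2πℤ`. -/
def tInt (f : ℝ → ℂ) : ℂ := ∫ x in (0:ℝ)..(2 * Real.pi), f x

/-- Squared `L²(𝕋)` norm. -/
def L2sq (f : ℝ → ℂ) : ℝ := ∫ x in (0:ℝ)..(2 * Real.pi), ‖f x‖ ^ 2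

/-- Squared `Hᵏ(𝕋)` norm: `‖u‖² = ‖u‖²_{L²} + ‖∂ₓᵏu‖²_{L²}`. -/
def HkSq (k : ℕ) (f : ℝ → ℂ) : ℝ := L2sq f + L2sq (pD k f)

/-- `Hᵏ(𝕋)` norm. -/
def HkNorm (k : ℕ) (f : ℝ → ℂ) : ℝ := Real.sqrt (HkSq k f)

/-- A classical (smooth and `2π`-periodic in space, differentiable in time) solution of the
defocusing NLS `i ∂ₜ u + ∂ₓ² u - u |u|^{2p} = 0` for times in the set `I`. -/
structure IsNLS (p : ℕ) (I : Set ℝ) (u : ℝ → ℝ → ℂ) : Prop where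
  smooth : ∀ t ∈ I, ContDiff ℝ (⊤ : ℕ∞) (u t)
  periodic : ∀ t ∈ I, Function.Periodic (u t) (2 * Real.pi)
  tdiff : ∀ (x : ℝ), ∀ t ∈ I, DifferentiableAt ℝ (fun s => u s x) t
  eqn : ∀ t ∈ I, ∀ x : ℝ,
    Complex.I * deriv (fun s => u s x) t + pD 2 (u t) x
      = u t x * ((‖u t x‖ : ℂ)) ^ (2 * p)

/-- `𝓘_{k,h}(u) = Im ∫ (∂ₓ^{k-h}u)² ∂ₓ^{2h}u · u^{p-2} ū^{p+1}`. -/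
def IdenR (p k h : ℕ) (f : ℝ → ℂ) : ℝ :=
  (tInt fun x => (pD (k - h) f x) ^ 2 * pD (2 * h) f x * f x ^ (p - 2) * (cD 0 f x) ^ (p + 1)).im

/-- `𝓚_{k,h}(u) = Im ∫ (∂ₓ^{k-h}u)² ∂ₓ^{2h}ū · u^{p-1} ū^{p}`. -/
def KdenR (p k h : ℕ) (f : ℝ → ℂ) : ℝ :=
  (tInt fun x => (pD (k - h) f x) ^ 2 * cD (2 * h) f x * f x ^ (p - 1) * (cD 0 f x) ^ p).im

/-- `𝓥_{k,h}(u) = Im ∫ ∂ₓ^{k-h}u ∂ₓ^{k-h-1}ū ∂ₓ^{2h+1}u · u^{p-1} ū^{p}`. -/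
def VdenR (p k h : ℕ) (f : ℝ → ℂ) : ℝ :=
  (tInt fun x => pD (k - h) f x * cD (k - h - 1) f x * pD (2 * h + 1) f x
      * f x ^ (p - 1) * (cD 0 f x) ^ p).im

/-- `𝓦_{k,h}(u) = Im ∫ ∂ₓ^{k-h}u ∂ₓ^{k-h-1}ū ∂ₓ^{2h+1}ū · u^{p} ū^{p-1}`. -/
def WdenR (p k h : ℕ) (f : ℝ → ℂ) : ℝ :=
  (tInt fun x => pD (k - h) f x * cD (k - h - 1) f x * cD (2 * h + 1) f x
      * f x ^ p * (cD 0 f x) ^ (p - 1)).im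

/-- `Ĩ_{k,h}(u) = Re ∫ (∂ₓ^{k-h}u)² ∂ₓ^{2h-2}u · ū^{p+1} u^{p-2}`. -/
def ItildeR (p k h : ℕ) (f : ℝ → ℂ) : ℝ :=
  (tInt fun x => (pD (k - h) f x) ^ 2 * pD (2 * h - 2) f x * (cD 0 f x) ^ (p + 1)
      * f x ^ (p - 2)).re

/-- `K̃_{k,h}(u) = Re ∫ (∂ₓ^{k-h}u)² ∂ₓ^{2h-2}ū · ū^{p} u^{p-1}`. -/
def KtildeR (p k h : ℕ) (f : ℝ → ℂ) : ℝ :=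
  (tInt fun x => (pD (k - h) f x) ^ 2 * cD (2 * h - 2) f x * (cD 0 f x) ^ p
      * f x ^ (p - 1)).re

/-- `Ṽ_{k,h}(u) = Re ∫ |∂ₓ^{k-h}u|² ∂ₓ^{2h-2}u · ū |u|^{2(p-1)}`. -/
def VtildeR (p k h : ℕ) (f : ℝ → ℂ) : ℝ :=
  (tInt fun x => pD (k - h) f x * cD (k - h) f x * pD (2 * h - 2) f x * cD 0 f x
      * (f x * cD 0 f x) ^ (p - 1)).re

/-- `W̃_{k,h}(u) = Re ∫ ∂ₓ^{k-h}u ∂ₓ^{k-h-1}ū ∂ₓ^{2h-1}u · ū^{p} u^{p-1}`. -/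
def WtildeR (p k h : ℕ) (f : ℝ → ℂ) : ℝ :=
  (tInt fun x => pD (k - h) f x * cD (k - h - 1) f x * pD (2 * h - 1) f x
      * (cD 0 f x) ^ p * f x ^ (p - 1)).re

/-- `Ĩ*_{k,h}`: the time derivative of `Ĩ_{k,h}` with `∂ₜu` replaced by `i∂ₓ²u`
and `∂ₜū` replaced by `-i∂ₓ²ū`. -/
def ItildeStar (p k h : ℕ) (f : ℝ → ℂ) : ℝ :=
  (tInt fun x =>
      2 * (Complex.I * pD (k - h + 2) f x) * pD (k - h) f x * pD (2 * h - 2) f x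
          * (cD 0 f x) ^ (p + 1) * f x ^ (p - 2)
    + (pD (k - h) f x) ^ 2 * (Complex.I * pD (2 * h) f x) * (cD 0 f x) ^ (p + 1)
          * f x ^ (p - 2)
    + (pD (k - h) f x) ^ 2 * pD (2 * h - 2) f x
          * (((p : ℂ) + 1) * (cD 0 f x) ^ p * (-Complex.I * cD 2 f x)) * f x ^ (p - 2)
    + (pD (k - h) f x) ^ 2 * pD (2 * h - 2) f x * (cD 0 f x) ^ (p + 1)
          * (((p : ℂ) - 2) * f x ^ (p - 3) * (Complex.I * pD 2 f x))).re

/-- `K̃*_{k,h}`. -/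
def KtildeStar (p k h : ℕ) (f : ℝ → ℂ) : ℝ :=
  (tInt fun x =>
      2 * (Complex.I * pD (k - h + 2) f x) * pD (k - h) f x * cD (2 * h - 2) f x
          * (cD 0 f x) ^ p * f x ^ (p - 1)
    + (pD (k - h) f x) ^ 2 * (-Complex.I * cD (2 * h) f x) * (cD 0 f x) ^ p * f x ^ (p - 1)
    + (pD (k - h) f x) ^ 2 * cD (2 * h - 2) f x
          * ((p : ℂ) * (cD 0 f x) ^ (p - 1) * (-Complex.I * cD 2 f x)) * f x ^ (p - 1)
    + (pD (k - h) f x) ^ 2 * cD (2 * h - 2) f x * (cD 0 f x) ^ p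
          * (((p : ℂ) - 1) * f x ^ (p - 2) * (Complex.I * pD 2 f x))).re

/-- `Ṽ*_{k,h}`. -/
def VtildeStar (p k h : ℕ) (f : ℝ → ℂ) : ℝ :=
  (tInt fun x =>
      (Complex.I * pD (k - h + 2) f x) * cD (k - h) f x * pD (2 * h - 2) f x * cD 0 f x
          * (f x * cD 0 f x) ^ (p - 1)
    + pD (k - h) f x * (-Complex.I * cD (k - h + 2) f x) * pD (2 * h - 2) f x * cD 0 f x
          * (f x * cD 0 f x) ^ (p - 1)
    + pD (k - h) f x * cD (k - h) f x * (Complex.I * pD (2 * h) f x) * cD 0 f x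
          * (f x * cD 0 f x) ^ (p - 1)
    + pD (k - h) f x * cD (k - h) f x * pD (2 * h - 2) f x * (-Complex.I * cD 2 f x)
          * (f x * cD 0 f x) ^ (p - 1)
    + pD (k - h) f x * cD (k - h) f x * pD (2 * h - 2) f x * cD 0 f x
          * (((p : ℂ) - 1) * (f x * cD 0 f x) ^ (p - 2)
              * ((Complex.I * pD 2 f x) * cD 0 f x + f x * (-Complex.I * cD 2 f x)))).re

/-- `W̃*_{k,h}`. -/
def WtildeStar (p k h : ℕ) (f : ℝ → ℂ) : ℝ :=
  (tInt fun x =>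
      (Complex.I * pD (k - h + 2) f x) * cD (k - h - 1) f x * pD (2 * h - 1) f x
          * (cD 0 f x) ^ p * f x ^ (p - 1)
    + pD (k - h) f x * (-Complex.I * cD (k - h + 1) f x) * pD (2 * h - 1) f x
          * (cD 0 f x) ^ p * f x ^ (p - 1)
    + pD (k - h) f x * cD (k - h - 1) f x * (Complex.I * pD (2 * h + 1) f x)
          * (cD 0 f x) ^ p * f x ^ (p - 1)
    + pD (k - h) f x * cD (k - h - 1) f x * pD (2 * h - 1) f x
          * ((p : ℂ) * (cD 0 f x) ^ (p - 1) * (-Complex.I * cD 2 f x)) * f x ^ (p - 1)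
    + pD (k - h) f x * cD (k - h - 1) f x * pD (2 * h - 1) f x * (cD 0 f x) ^ p
          * (((p : ℂ) - 1) * f x ^ (p - 2) * (Complex.I * pD 2 f x))).re

/-- The entries of the multi-index are nonincreasing. -/
def antitoneIdx {n : ℕ} (i : Fin n → ℕ) : Prop := ∀ l l' : Fin n, l ≤ l' → i l' ≤ i l

/-- The functional `𝓙_{(i,j)}(u) = ∫ ∂ₓ^{i₁}u ⋯ ∂ₓ^{iₙ}u ∂ₓ^{j₁}ū ⋯ ∂ₓ^{jₙ}ū`. -/
def Jfun {n : ℕ} (ij : (Fin n → ℕ) × (Fin n → ℕ)) (f : ℝ → ℂ) : ℂ :=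
  tInt fun x => (∏ l, pD (ij.1 l) f x) * ∏ l, cD (ij.2 l) f x

/-- The index set `𝓒ᵏ`. -/
def Cset (p k : ℕ) : Set ((Fin (2 * p + 1) → ℕ) × (Fin (2 * p + 1) → ℕ)) :=
  {ij | antitoneIdx ij.1 ∧ antitoneIdx ij.2 ∧ (∑ l, (ij.1 l + ij.2 l)) = 2 * k - 2 ∧
    ij.1 0 ≤ k - 1 ∧ ij.2 0 ≤ k - 1}

/-- The index set `𝓓ᵏ`. -/
def Dset (p k : ℕ) : Set ((Fin (p + 1) → ℕ) × (Fin (p + 1) → ℕ)) :=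
  {ij | antitoneIdx ij.1 ∧ antitoneIdx ij.2 ∧ (∑ l, (ij.1 l + ij.2 l)) = 2 * k ∧
    4 ≤ (∑ l, min (ij.1 l) 1) + ∑ l, min (ij.2 l) 1}

/-- The index set `𝓖ᵏ`. -/
def Gset (p k : ℕ) : Set ((Fin (p + 1) → ℕ) × (Fin (p + 1) → ℕ)) :=
  {ij | antitoneIdx ij.1 ∧ antitoneIdx ij.2 ∧ (∑ l, (ij.1 l + ij.2 l)) = 2 * k - 2 ∧
    ij.1 0 ≤ k - 1 ∧ ij.2 0 ≤ k - 1}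

/-- Smooth `2π`-periodic functions on the line (i.e. smooth functions on the torus). -/
abbrev SPfun := {f : ℝ → ℂ // ContDiff ℝ (⊤ : ℕ∞) f ∧ Function.Periodic f (2 * Real.pi)}

/-- The span `Ω_k + Θ_k` of the functionals `𝓙_{(i,j)}` for `(i,j) ∈ 𝓓ᵏ ∪ 𝓒ᵏ`. -/
def spanJ (p k : ℕ) : Submodule ℂ (SPfun → ℂ) :=
  Submodule.span ℂ
    (({F | ∃ ij ∈ Dset p k, F = fun f => Jfun ij f.1} ∪
      {F | ∃ ij ∈ Cset p k, F = fun f => Jfun ij f.1} : Set (SPfun → ℂ)))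

/-- Equivalence of densities modulo `Ω_k + Θ_k`. -/
def EquivMod (p k : ℕ) (F G : SPfun → ℂ) : Prop := F - G ∈ spanJ p k

/-!
Each factor `i` produced by `∂ₜu = i∂ₓ²u` turns a real part into an imaginary part, so it is enough
to compute with `Im ∫ P` for differential polynomials `P` in `u` and `ū` with real coefficients.
Modulo `Ω_k` three rules hold: total derivatives vanish (integration by parts), `conj P ≡ -P`, and
balanced monomials of weight `2k` with at least four differentiated factors vanish. Thus, when a
product of top-order factors multiplies `g = uᵃūᵇ`, only the part of `∂ₓg`, `∂ₓ²g` or `∂ₜg` that is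
linear in the derivatives of `u` and `ū` survives. For `Ĩ*` the terms in `∂ₓ²g` and `∂ₜg` add up,
cancelling `∂ₓ²ū`; for `Ṽ*` the two conjugate halves of the result are identified by `conj P ≡ -P`;
for `W̃*` one combines the relations `∂ₓ(∂ₓᵐu ∂ₓⁱu ∂ₓˡū) g ≡ 0` for three triples `(m, i, l)`.
-/

/-- The space `Ω_k` alone: the span of the functionals `𝓙_{(i,j)}` for `(i,j) ∈ 𝓓ᵏ`. -/
def omegaSpan (p k : ℕ) : Submodule ℂ (SPfun → ℂ) :=
  Submodule.span ℂ {F | ∃ ij ∈ Dset p k, F = fun f => Jfun ij f.1}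

lemma omegaSpan_le_spanJ (p k : ℕ) : omegaSpan p k ≤ spanJ p k :=
  Submodule.span_mono Set.subset_union_left

lemma EquivMod.of_sModEq_omegaSpan {p k : ℕ} {F G : SPfun → ℂ}
    (h : F ≡ G [SMOD omegaSpan p k]) : EquivMod p k F G :=
  omegaSpan_le_spanJ p k (SModEq.sub_mem.1 h)

lemma exists_antitone_map_univ_eq {α : Type*} [LinearOrder α] {n : ℕ} (s : Multiset α)
    (hs : s.card = n) : ∃ i : Fin n → α, Antitone i ∧ Finset.univ.val.map i = s := by
  obtain ⟨l, hl, rfl⟩ : ∃ l : List α, l.SortedGE ∧ (l : Multiset α) = s :=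
    ⟨s.sort (· ≥ ·), (s.pairwise_sort (· ≥ ·)).sortedGE, s.sort_eq (· ≥ ·)⟩
  obtain rfl : l.length = n := hs
  exact ⟨l.get, hl.antitone_get, by rw [Fin.univ_val_map, List.ofFn_get]⟩

lemma pD_zero (f : ℝ → ℂ) : pD 0 f = f := iteratedDeriv_zero

lemma SPfun.hasDerivAt_pD (f : SPfun) (n : ℕ) (x : ℝ) :
    HasDerivAt (pD n f.1) (pD (n + 1) f.1 x) x := by
  have hdiff : Differentiable ℝ (iteratedDeriv n f.1) :=
    f.2.1.differentiable_iteratedDeriv n (by exact_mod_cast WithTop.coe_lt_top n)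
  have hderiv := (hdiff x).hasDerivAt
  rwa [← iteratedDeriv_succ] at hderiv

lemma SPfun.hasDerivAt_cD (f : SPfun) (n : ℕ) (x : ℝ) :
    HasDerivAt (cD n f.1) (cD (n + 1) f.1 x) x :=
  (f.hasDerivAt_pD n x).star

lemma SPfun.periodic_pD (f : SPfun) (n : ℕ) : Function.Periodic (pD n f.1) (2 * Real.pi) := by
  intro x
  have hshift : (fun y => f.1 (y + 2 * Real.pi)) = f.1 := funext f.2.2
  have hcomp := congrFun (iteratedDeriv_comp_add_const n f.1 (2 * Real.pi)) x
  rw [hshift] at hcomp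
  exact hcomp.symm

/-- Formal densities: polynomials in the jets `∂ₓⁿu` (the variables `Sum.inl n`) and `∂ₓⁿū`
(the variables `Sum.inr n`). Real coefficients suffice, since every factor `i` in the `*`-densities
is absorbed by exchanging real and imaginary parts. -/
abbrev DiffPoly := MvPolynomial (ℕ ⊕ ℕ) ℝ

namespace DiffPoly

open MvPolynomial

/-- The formal derivative `∂ₓⁿu`. -/
def u (n : ℕ) : DiffPoly := X (Sum.inl n)

/-- The formal derivative `∂ₓⁿū`. -/
def v (n : ℕ) : DiffPoly := X (Sum.inr n)

/-- The formal derivation `∂ₓ`. -/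
def dx : Derivation ℝ DiffPoly DiffPoly :=
  mkDerivation ℝ (Sum.elim (fun n => u (n + 1)) fun n => v (n + 1))

/-- The linear Schrödinger flow as a formal derivation, divided by `i`: the rules `∂ₜu = i∂ₓ²u` and
`∂ₜū = -i∂ₓ²ū` become `u n ↦ u (n + 2)` and `v n ↦ -v (n + 2)`. -/
def dt : Derivation ℝ DiffPoly DiffPoly :=
  mkDerivation ℝ (Sum.elim (fun n => u (n + 2)) fun n => -v (n + 2))

/-- Formal complex conjugation, exchanging `∂ₓⁿu` and `∂ₓⁿū`. -/
def conj : DiffPoly →ₐ[ℝ] DiffPoly := rename Sum.swap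

/-- The value at `x` of a formal density along the function `f`. -/
def eval (f : SPfun) (x : ℝ) : DiffPoly →ₐ[ℝ] ℂ :=
  aeval (Sum.elim (fun n => pD n f.1 x) fun n => cD n f.1 x)

section Generators

variable (n : ℕ) (f : SPfun) (x : ℝ)

@[simp] lemma dx_u : dx (u n) = u (n + 1) := mkDerivation_X ..

@[simp] lemma dx_v : dx (v n) = v (n + 1) := mkDerivation_X ..

@[simp] lemma dt_u : dt (u n) = u (n + 2) := mkDerivation_X ..

@[simp] lemma dt_v : dt (v n) = -v (n + 2) := mkDerivation_X ..

@[simp] lemma conj_u : conj (u n) = v n := rename_X ..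

@[simp] lemma conj_v : conj (v n) = u n := rename_X ..

@[simp] lemma eval_u : eval f x (u n) = pD n f.1 x := aeval_X ..

@[simp] lemma eval_v : eval f x (v n) = cD n f.1 x := aeval_X ..

end Generators

lemma eval_conj (f : SPfun) (x : ℝ) (P : DiffPoly) :
    eval f x (conj P) = starRingEnd ℂ (eval f x P) := by
  suffices (eval f x).comp conj = Complex.conjAe.toAlgHom.comp (eval f x) from
    DFunLike.congr_fun this P
  refine algHom_ext fun i => ?_
  rcases i with n | n
  · change eval f x (conj (u n)) = starRingEnd ℂ (eval f x (u n))
    simp [cD, pD]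
  · change eval f x (conj (v n)) = starRingEnd ℂ (eval f x (v n))
    simp [cD, pD]

lemma conj_dx (P : DiffPoly) : conj (dx P) = dx (conj P) := by
  induction P using MvPolynomial.induction_on with
  | C c => simp [conj]
  | add P Q hP hQ => simp only [map_add, hP, hQ]
  | mul_X P i hP =>
    have hX : conj (dx (X i)) = dx (conj (X i)) := by
      rcases i with n | n
      · change conj (dx (u n)) = dx (conj (u n))
        simp
      · change conj (dx (v n)) = dx (conj (v n))
        simp
    simp only [Derivation.leibniz, smul_eq_mul, map_add, map_mul, hP, hX]

lemma hasDerivAt_eval (f : SPfun) (P : DiffPoly) (x : ℝ) :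
    HasDerivAt (fun y => eval f y P) (eval f x (dx P)) x := by
  induction P using MvPolynomial.induction_on with
  | C c => simpa [eval] using hasDerivAt_const x (c : ℂ)
  | add P Q hP hQ => simpa using hP.fun_add hQ
  | mul_X P i hP =>
    have hX : HasDerivAt (fun y => eval f y (X i)) (eval f x (dx (X i))) x := by
      rcases i with n | n
      · change HasDerivAt (fun y => eval f y (u n)) (eval f x (dx (u n))) x
        simpa using f.hasDerivAt_pD n x
      · change HasDerivAt (fun y => eval f y (v n)) (eval f x (dx (v n))) x
        simpa using f.hasDerivAt_cD n x
    simpa [add_comm, mul_comm] using hP.fun_mul hX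

lemma continuous_eval (f : SPfun) (P : DiffPoly) : Continuous fun x => eval f x P :=
  continuous_iff_continuousAt.2 fun x => (hasDerivAt_eval f P x).continuousAt

lemma periodic_eval (f : SPfun) (P : DiffPoly) :
    Function.Periodic (fun x => eval f x P) (2 * Real.pi) := by
  intro x
  have hpD : ∀ n, pD n f.1 (x + 2 * Real.pi) = pD n f.1 x := fun n => f.periodic_pD n x
  have hcD : ∀ n, cD n f.1 (x + 2 * Real.pi) = cD n f.1 x := fun n =>
    congrArg (starRingEnd ℂ) (hpD n)
  simp only [eval, hpD, hcD]

/-- The density `u ↦ ∫_𝕋 P(u)` as a linear function of the formal density `P`. -/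
def integral (f : SPfun) : DiffPoly →ₗ[ℝ] ℂ where
  toFun P := tInt fun x => eval f x P
  map_add' P Q := by
    simp only [map_add]
    exact intervalIntegral.integral_add ((continuous_eval f P).intervalIntegrable _ _)
      ((continuous_eval f Q).intervalIntegrable _ _)
  map_smul' c P := by
    simp only [map_smul]
    exact intervalIntegral.integral_smul _ _

lemma integral_apply (f : SPfun) (P : DiffPoly) : integral f P = tInt fun x => eval f x P := rfl

lemma integral_dx (f : SPfun) (P : DiffPoly) : integral f (dx P) = 0 := by
  have hFTC := intervalIntegral.integral_eq_sub_of_hasDerivAt (a := 0) (b := 2 * Real.pi)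
    (fun x _ => hasDerivAt_eval f P x) ((continuous_eval f (dx P)).intervalIntegrable _ _)
  rw [integral_apply, tInt, hFTC, sub_eq_zero]
  simpa using periodic_eval f P 0

lemma integral_conj (f : SPfun) (P : DiffPoly) :
    integral f (conj P) = starRingEnd ℂ (integral f P) := by
  simp only [integral_apply, eval_conj]
  exact intervalIntegral.intervalIntegral_conj

lemma re_tInt_I_mul_eval (f : SPfun) (P : DiffPoly) :
    (tInt fun x => Complex.I * eval f x P).re = -(integral f P).im := by
  rw [← Complex.I_mul_re, integral_apply, tInt, intervalIntegral.integral_const_mul, tInt]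

/-- The map `P ↦ Im ∫_𝕋 P`, with values in the complex functionals that contain `Ω_k`. -/
def imIntegral : DiffPoly →ₗ[ℝ] (SPfun → ℂ) :=
  LinearMap.pi fun f => Complex.ofRealCLM.toLinearMap ∘ₗ Complex.imLm ∘ₗ integral f

lemma imIntegral_apply (P : DiffPoly) (f : SPfun) :
    imIntegral P f = ((integral f P).im : ℂ) := rfl

lemma imIntegral_nsmul_apply (n : ℕ) (P : DiffPoly) (f : SPfun) :
    imIntegral (n • P) f = n * imIntegral P f := by
  rw [map_nsmul, Pi.smul_apply, nsmul_eq_mul]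

/-- Formal densities `P` for which `Im ∫_𝕋 P` belongs to `Ω_k`. -/
def imNull (p k : ℕ) : Submodule ℝ DiffPoly :=
  ((omegaSpan p k).restrictScalars ℝ).comap imIntegral

lemma mem_imNull {p k : ℕ} {P : DiffPoly} : P ∈ imNull p k ↔ imIntegral P ∈ omegaSpan p k :=
  Iff.rfl

lemma imIntegral_sModEq {p k : ℕ} {P Q : DiffPoly} (h : P ≡ Q [SMOD imNull p k]) :
    imIntegral P ≡ imIntegral Q [SMOD omegaSpan p k] := by
  rw [SModEq.sub_mem, ← map_sub, ← mem_imNull]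
  exact SModEq.sub_mem.1 h

/-- The monomial `∏_{i ∈ s} ∂ₓⁱu · ∏_{j ∈ t} ∂ₓʲū`. -/
def jet (s t : Multiset ℕ) : DiffPoly := (s.map u).prod * (t.map v).prod

/-- The undifferentiated monomial `uᵃ ūᵇ`. -/
def pw (a b : ℕ) : DiffPoly := u 0 ^ a * v 0 ^ b

lemma conj_jet (s t : Multiset ℕ) : conj (jet s t) = jet t s := by
  simp [jet, map_multiset_prod, Multiset.map_map, mul_comm]

@[simp] lemma conj_pw (a b : ℕ) : conj (pw a b) = pw b a := by
  simp [pw, mul_comm]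

lemma dx_pw (a b : ℕ) :
    dx (pw a b) = a * u 1 * pw (a - 1) b + b * v 1 * pw a (b - 1) := by
  simp only [pw, Derivation.leibniz, Derivation.leibniz_pow, dx_u, dx_v, zero_add, smul_eq_mul,
    nsmul_eq_mul]
  ring

lemma dt_pw (a b : ℕ) :
    dt (pw a b) = a * u 2 * pw (a - 1) b - b * v 2 * pw a (b - 1) := by
  simp only [pw, Derivation.leibniz, Derivation.leibniz_pow, dt_u, dt_v, zero_add, smul_eq_mul,
    nsmul_eq_mul]
  ring

lemma u_zero_mul_pw (a b : ℕ) : u 0 * pw a b = pw (a + 1) b := by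
  simp only [pw]
  ring

lemma integral_jet_map_univ (f : SPfun) {n : ℕ} (i j : Fin n → ℕ) :
    integral f (jet (Finset.univ.val.map i) (Finset.univ.val.map j)) = Jfun (i, j) f.1 := by
  simp only [integral_apply, jet, Jfun, map_mul, map_prod, Multiset.map_map, Function.comp_def,
    eval_u, eval_v, Finset.prod_map_val]

lemma integral_jet_mem_omegaSpan {p k : ℕ} {s t : Multiset ℕ} (hs : s.card = p + 1)
    (ht : t.card = p + 1) (hsum : s.sum + t.sum = 2 * k)
    (hfour : 4 ≤ (s.map (min · 1)).sum + (t.map (min · 1)).sum) :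
    (fun f => integral f (jet s t)) ∈ omegaSpan p k := by
  obtain ⟨i, hi, rfl⟩ := exists_antitone_map_univ_eq s hs
  obtain ⟨j, hj, rfl⟩ := exists_antitone_map_univ_eq t ht
  refine Submodule.subset_span ⟨(i, j), ⟨fun _ _ h => hi h, fun _ _ h => hj h, ?_, ?_⟩,
    funext fun f => integral_jet_map_univ f i j⟩
  · rw [Finset.sum_add_distrib]
    exact hsum
  · simp only [Multiset.map_map] at hfour
    exact hfour

lemma jet_mem_imNull {p k : ℕ} {s t : Multiset ℕ} (hs : s.card = p + 1)
    (ht : t.card = p + 1) (hsum : s.sum + t.sum = 2 * k)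
    (hfour : 4 ≤ (s.map (min · 1)).sum + (t.map (min · 1)).sum) : jet s t ∈ imNull p k := by
  have hJ := integral_jet_mem_omegaSpan hs ht hsum hfour
  have hJconj := integral_jet_mem_omegaSpan ht hs (by omega) (k := k) (by omega)
  rw [mem_imNull]
  convert (omegaSpan p k).smul_mem (1 / (2 * Complex.I)) (sub_mem hJ hJconj) using 1
  funext f
  simp [imIntegral_apply, ← conj_jet s t, integral_conj, Complex.im_eq_sub_conj,
    div_eq_inv_mul]

lemma dx_mul_sModEq (p k : ℕ) (P Q : DiffPoly) :
    dx P * Q ≡ -(P * dx Q) [SMOD imNull p k] := by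
  have hexact : dx P * Q - -(P * dx Q) = dx (P * Q) := by
    simp only [Derivation.leibniz, smul_eq_mul]
    ring
  rw [SModEq.sub_mem, hexact, mem_imNull]
  convert (omegaSpan p k).zero_mem
  funext f
  simp only [imIntegral_apply, integral_dx, Complex.zero_im, Complex.ofReal_zero, Pi.zero_apply]

lemma conj_sModEq (p k : ℕ) (P : DiffPoly) : conj P ≡ -P [SMOD imNull p k] := by
  rw [SModEq.sub_mem, mem_imNull]
  convert (omegaSpan p k).zero_mem
  funext f
  simp [imIntegral_apply, integral_conj]

lemma conj_mem_imNull {p k : ℕ} {P : DiffPoly} (hP : P ∈ imNull p k) : conj P ∈ imNull p k :=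
  SModEq.zero.1 <| (conj_sModEq p k P).trans <| SModEq.zero.2 <| neg_mem hP

/-- The monomial `jet s t * pw a b` has degree `p + 1` in both `u` and `ū`, weight (total number of
derivatives) `w`, and at least `n` differentiated factors, listed by `s` and `t`. -/
structure IsType (p w n : ℕ) (s t : Multiset ℕ) (a b : ℕ) : Prop where
  card_left : s.card + a = p + 1
  card_right : t.card + b = p + 1
  weight : s.sum + t.sum = w
  pos_left : ∀ i ∈ s, 1 ≤ i
  pos_right : ∀ j ∈ t, 1 ≤ j
  le_card : n ≤ s.card + t.card

namespace IsType

variable {p k w n a b : ℕ} {s t : Multiset ℕ}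

lemma symm (h : IsType p w n s t a b) : IsType p w n t s b a where
  card_left := h.card_right
  card_right := h.card_left
  weight := by rw [add_comm, h.weight]
  pos_left := h.pos_right
  pos_right := h.pos_left
  le_card := by rw [add_comm]; exact h.le_card

lemma cons_left (h : IsType p w n s t (a + 1) b) {i : ℕ} (hi : 1 ≤ i) :
    IsType p (w + i) (n + 1) (i ::ₘ s) t a b where
  card_left := by rw [Multiset.card_cons, ← h.card_left]; ring
  card_right := h.card_right
  weight := by rw [Multiset.sum_cons, ← h.weight]; ring
  pos_left := by simpa [hi] using h.pos_left
  pos_right := h.pos_right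
  le_card := by rw [Multiset.card_cons]; linarith [h.le_card]

lemma jet_mul_pw_mem (h : IsType p (2 * k) 4 s t a b) : jet s t * pw a b ∈ imNull p k := by
  have hcard_le {r : Multiset ℕ} (hr : ∀ i ∈ r, 1 ≤ i) : r.card ≤ (r.map (min · 1)).sum := by
    simpa using Multiset.card_nsmul_le_sum (s := r.map (min · 1)) (a := 1) (by simpa using hr)
  have hs := hcard_le h.pos_left
  have ht := hcard_le h.pos_right
  have hn := h.le_card
  have hmem : jet (s + Multiset.replicate a 0) (t + Multiset.replicate b 0) ∈ imNull p k :=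
    jet_mem_imNull (by simpa using h.card_left) (by simpa using h.card_right)
      (by simpa using h.weight) (by simp; omega)
  convert hmem using 1
  simp only [jet, pw, Multiset.map_add, Multiset.map_replicate, Multiset.prod_add,
    Multiset.prod_replicate]
  ring

-- The coefficient `a` makes the statement true for `a = 0`, where `a - 1` is truncated.
lemma natCast_mul_u_mem (h : IsType p w 3 s t a b) {i : ℕ} (hi : 1 ≤ i) (hw : w + i = 2 * k) :
    (a : DiffPoly) * (jet s t * (u i * pw (a - 1) b)) ∈ imNull p k := by
  rcases a with _ | a
  · simp
  · have hmem : jet (i ::ₘ s) t * pw a b ∈ imNull p k := (hw ▸ h.cons_left hi).jet_mul_pw_mem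
    rw [← nsmul_eq_mul]
    convert nsmul_mem hmem (a + 1) using 2
    simp only [jet, Nat.add_sub_cancel, Multiset.map_cons, Multiset.prod_cons]
    ring

lemma natCast_mul_v_mem (h : IsType p w 3 s t a b) {j : ℕ} (hj : 1 ≤ j) (hw : w + j = 2 * k) :
    (b : DiffPoly) * (jet s t * (v j * pw a (b - 1))) ∈ imNull p k := by
  simpa [conj_jet] using conj_mem_imNull (h.symm.natCast_mul_u_mem hj hw)

lemma jet_mul_dx_pw_mem (h : IsType p w 3 s t a b) (hw : w + 1 = 2 * k) :
    jet s t * dx (pw a b) ∈ imNull p k := by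
  convert add_mem (h.natCast_mul_u_mem le_rfl hw) (h.natCast_mul_v_mem le_rfl hw) using 1
  rw [dx_pw]
  ring

lemma dx_jet_mul_pw_sModEq_zero (h : IsType p w 3 s t a b) (hw : w + 1 = 2 * k) :
    dx (jet s t) * pw a b ≡ 0 [SMOD imNull p k] :=
  (dx_mul_sModEq p k _ _).trans <| SModEq.zero.2 <| neg_mem <| h.jet_mul_dx_pw_mem hw

lemma jet_mul_dt_pw_mem (h : IsType p w 3 s t a b) (hw : w + 2 = 2 * k) :
    jet s t * dt (pw a b) ∈ imNull p k := by
  convert sub_mem (h.natCast_mul_u_mem one_le_two hw) (h.natCast_mul_v_mem one_le_two hw) using 1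
  rw [dt_pw]
  ring

lemma natCast_mul_u_one_mul_dx_pw_mem (h : IsType p w 2 s t a b) (hw : w + 2 = 2 * k) :
    jet s t * (a * u 1 * dx (pw (a - 1) b)) ∈ imNull p k := by
  rcases a with _ | a
  · simp
  · have hmem : jet (1 ::ₘ s) t * dx (pw a b) ∈ imNull p k :=
      (h.cons_left le_rfl).jet_mul_dx_pw_mem hw
    convert nsmul_mem hmem (a + 1) using 1
    simp only [jet, Nat.add_sub_cancel, Multiset.map_cons, Multiset.prod_cons, nsmul_eq_mul]
    ring

lemma natCast_mul_v_one_mul_dx_pw_mem (h : IsType p w 2 s t a b) (hw : w + 2 = 2 * k) :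
    jet s t * (b * v 1 * dx (pw a (b - 1))) ∈ imNull p k := by
  simpa [conj_jet, conj_dx] using conj_mem_imNull (h.symm.natCast_mul_u_one_mul_dx_pw_mem hw)

end IsType

lemma dx_dx_pw_add_dt_pw (a b : ℕ) :
    dx (dx (pw a b)) + dt (pw a b) = 2 * a * u 2 * pw (a - 1) b
      + (a * u 1 * dx (pw (a - 1) b) + b * v 1 * dx (pw a (b - 1))) := by
  simp only [dx_pw a b, dt_pw, map_add, Derivation.leibniz, Derivation.map_natCast, dx_u, dx_v,
    smul_eq_mul]
  ring

/-- The current whose divergence is `dt (uᵃ ūᵃ)` up to terms quadratic in first derivatives. -/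
def current (a : ℕ) : DiffPoly := a * u 1 * pw (a - 1) a - a * v 1 * pw a (a - 1)

lemma conj_current (a : ℕ) : conj (current a) = -current a := by
  simp [current]

lemma dt_pw_self (a : ℕ) :
    dt (pw a a) = dx (current a)
      - (a * u 1 * dx (pw (a - 1) a) - a * v 1 * dx (pw a (a - 1))) := by
  simp only [current, dt_pw, map_sub, Derivation.leibniz, Derivation.map_natCast, dx_u, dx_v,
    smul_eq_mul]
  ring

variable {p j a b : ℕ}

lemma dt_u_sq_mul_pw_sModEq (hj : 1 ≤ j) (ha : a + 1 = p) (hb : b = p + 1) :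
    dt (u j ^ 2 * pw a b) ≡
      -(2 • (u (j + 1) ^ 2 * pw a b)) + (2 * a) • (u j ^ 2 * u 2 * pw (a - 1) b)
      [SMOD imNull p (j + 1)] := by
  set g := pw a b
  set N := imNull p (j + 1)
  set rest := a * u 1 * dx (pw (a - 1) b) + b * v 1 * dx (pw a (b - 1))
  have htype : IsType p (2 * j) 2 {j, j} 0 a b :=
    ⟨by simp; omega, by simp [hb], by simp; omega, by simpa, by simp, by simp⟩
  have hrest : u j ^ 2 * rest ≡ 0 [SMOD N] := SModEq.zero.2 <| by
    simpa [rest, jet, mul_add, sq] using add_mem (htype.natCast_mul_u_one_mul_dx_pw_mem rfl)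
      (htype.natCast_mul_v_one_mul_dx_pw_mem rfl)
  calc dt (u j ^ 2 * g)
      = 2 • (dx (u (j + 1)) * (u j * g)) + u j ^ 2 * dt g := by
        simp only [Derivation.leibniz, Derivation.leibniz_pow, dt_u, dx_u, smul_eq_mul,
          Nat.add_one_sub_one, pow_one]
        ring
    _ ≡ 2 • -(u (j + 1) * dx (u j * g)) + u j ^ 2 * dt g [SMOD N] := by
        grw [dx_mul_sModEq]
    _ = -(2 * (u (j + 1) ^ 2 * g)) - dx (u j ^ 2) * dx g + u j ^ 2 * dt g := by
        simp only [Derivation.leibniz, Derivation.leibniz_pow, dx_u, smul_eq_mul,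
          Nat.add_one_sub_one, pow_one]
        ring
    _ ≡ -(2 * (u (j + 1) ^ 2 * g)) - -(u j ^ 2 * dx (dx g)) + u j ^ 2 * dt g [SMOD N] := by
        grw [dx_mul_sModEq]
    _ = -(2 * (u (j + 1) ^ 2 * g)) + 2 * a * (u j ^ 2 * u 2 * pw (a - 1) b) + u j ^ 2 * rest := by
        linear_combination u j ^ 2 * dx_dx_pw_add_dt_pw a b
    _ ≡ -(2 * (u (j + 1) ^ 2 * g)) + 2 * a * (u j ^ 2 * u 2 * pw (a - 1) b) [SMOD N] := by
        grw [hrest, add_zero]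
    _ = -(2 • (u (j + 1) ^ 2 * g)) + (2 * a) • (u j ^ 2 * u 2 * pw (a - 1) b) := by
        simp only [nsmul_eq_mul, Nat.cast_mul, Nat.cast_ofNat]

lemma dt_u_mul_v_mul_pw_sModEq (hj : 1 ≤ j) :
    dt (u j * v j * pw p p) ≡ -((4 * p) • (u (j + 1) * v j * u 1 * pw (p - 1) p))
      [SMOD imNull p (j + 1)] := by
  set g := pw p p
  set N := imNull p (j + 1)
  set rest := p * u 1 * dx (pw (p - 1) p) - p * v 1 * dx (pw p (p - 1))
  set A := u (j + 1) * v j * (dx g + current p)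
  have htype : IsType p (2 * j) 2 {j} {j} p p :=
    ⟨by simp; omega, by simp; omega, by simp; omega, by simpa, by simpa, by simp⟩
  have hrest : u j * v j * rest ≡ 0 [SMOD N] := SModEq.zero.2 <| by
    simpa [rest, jet, mul_sub] using sub_mem (htype.natCast_mul_u_one_mul_dx_pw_mem rfl)
      (htype.natCast_mul_v_one_mul_dx_pw_mem rfl)
  calc dt (u j * v j * g)
      = dx (u (j + 1) * v j - u j * v (j + 1)) * g + dx (current p) * (u j * v j)
          - u j * v j * rest := by
        simp only [g, rest, Derivation.leibniz, map_sub, dt_pw_self, dt_u, dt_v, dx_u, dx_v,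
          smul_eq_mul]
        ring
    _ ≡ -((u (j + 1) * v j - u j * v (j + 1)) * dx g) + -(current p * dx (u j * v j))
          [SMOD N] := by
        grw [dx_mul_sModEq, dx_mul_sModEq, hrest, sub_zero]
    _ = -A + conj A := by
        simp only [A, g, Derivation.leibniz, dx_u, dx_v, smul_eq_mul, map_mul, map_add, conj_u,
          conj_v, conj_dx, conj_pw, conj_current]
        ring
    _ ≡ -A + -A [SMOD N] := by
        grw [conj_sModEq]
    _ = -((4 * p) • (u (j + 1) * v j * u 1 * pw (p - 1) p)) := by
        simp only [A, g, dx_pw, current]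
        ring

lemma dx_u_mul_u_mul_v_mul_pw_sModEq_zero {k m i l : ℕ} (ha : a + 1 = p) (hm : 1 ≤ m)
    (hi : 1 ≤ i) (hl : 1 ≤ l) (hw : m + i + l + 1 = 2 * k) :
    dx (u m * u i * v l) * pw a p ≡ 0 [SMOD imNull p k] := by
  have htype : IsType p (m + i + l) 3 {m, i} {l} a p :=
    ⟨by simp; omega, by simp; omega, by simp, by simp [hm, hi], by simpa, by simp⟩
  simpa [jet] using htype.dx_jet_mul_pw_sModEq_zero hw

lemma dt_u_mul_v_mul_u_one_mul_pw_sModEq (hj : 1 ≤ j) (ha : a + 1 = p) :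
    dt (u (j + 1) * v j * u 1 * pw a p) ≡
      -(2 • (u (j + 2) * v (j + 1) * u 1 * pw a p))
        + 2 • (u (j + 2) * v (j + 1) * v 1 * pw p a) + 2 • (u (j + 1) * v j * u 3 * pw a p)
      [SMOD imNull p (j + 2)] := by
  set g := pw a p
  set N := imNull p (j + 2)
  set W₀ := u (j + 2) * v (j + 1) * v 1 * pw p a
  have hdt : u (j + 1) * v j * u 1 * dt g ≡ 0 [SMOD N] := by
    have htype : IsType p (2 * j + 2) 3 {j + 1, 1} {j} a p :=
      ⟨by simp; omega, by simp; omega, by simp; omega, by simp, by simpa, by simp⟩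
    simpa [SModEq.zero, jet, mul_right_comm] using htype.jet_mul_dt_pw_mem (k := j + 2) (by omega)
  calc dt (u (j + 1) * v j * u 1 * g)
      = dx (u (j + 2) * u 1 * v j) * g - dx (u (j + 1) * u 2 * v j) * g
          + dx (u (j + 1) * u 1 * v (j + 1)) * g + u (j + 1) * v j * u 1 * dt g
          - 2 • (u (j + 2) * v (j + 1) * u 1 * g) - 2 • conj W₀
          + 2 • (u (j + 1) * v j * u 3 * g) := by
        simp only [W₀, g, Derivation.leibniz, dt_u, dt_v, dx_u, dx_v, smul_eq_mul, map_mul, conj_u,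
          conj_v, conj_pw]
        ring
    _ ≡ 0 - 0 + 0 + 0 - 2 • (u (j + 2) * v (j + 1) * u 1 * g) - 2 • -W₀
          + 2 • (u (j + 1) * v j * u 3 * g) [SMOD N] := by
        grw [hdt, conj_sModEq,
          dx_u_mul_u_mul_v_mul_pw_sModEq_zero ha (by omega) le_rfl hj (by omega),
          dx_u_mul_u_mul_v_mul_pw_sModEq_zero ha (by omega) one_le_two hj (by omega),
          dx_u_mul_u_mul_v_mul_pw_sModEq_zero ha (by omega) le_rfl (by omega) (by omega)]
    _ = -(2 • (u (j + 2) * v (j + 1) * u 1 * g)) + 2 • W₀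
          + 2 • (u (j + 1) * v j * u 3 * g) := by
        ring

section Densities

variable (f : SPfun) (k h : ℕ)

lemma ofReal_IdenR : (IdenR p k h f.1 : ℂ) =
    imIntegral (u (k - h) ^ 2 * u (2 * h) * pw (p - 2) (p + 1)) f := by
  simp only [IdenR, imIntegral_apply, integral_apply, pw, map_mul, map_pow, eval_u, eval_v,
    pD_zero, mul_assoc]

lemma ofReal_VdenR : (VdenR p k h f.1 : ℂ) =
    imIntegral (u (k - h) * v (k - h - 1) * u (2 * h + 1) * pw (p - 1) p) f := by
  simp only [VdenR, imIntegral_apply, integral_apply, pw, map_mul, map_pow, eval_u, eval_v,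
    pD_zero, mul_assoc]

lemma ofReal_WdenR : (WdenR p k h f.1 : ℂ) =
    imIntegral (u (k - h) * v (k - h - 1) * v (2 * h + 1) * pw p (p - 1)) f := by
  simp only [WdenR, imIntegral_apply, integral_apply, pw, map_mul, map_pow, eval_u, eval_v,
    pD_zero, mul_assoc]

variable {k h}

lemma ofReal_ItildeStar (hp : 2 ≤ p) (hh : 1 ≤ h) : (ItildeStar p k h f.1 : ℂ) =
    -imIntegral (dt (u (k - h) ^ 2 * u (2 * h - 2) * pw (p - 2) (p + 1))) f := by
  obtain ⟨q, rfl⟩ := Nat.exists_eq_add_of_le' hp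
  obtain ⟨l, rfl⟩ := Nat.exists_eq_add_of_le' hh
  rw [imIntegral_apply, ← Complex.ofReal_neg, ← re_tInt_I_mul_eval, ItildeStar]
  congr 3 with x
  simp only [pw, Derivation.leibniz, Derivation.leibniz_pow, dt_u, dt_v, smul_eq_mul, nsmul_eq_mul,
    map_add, map_neg, map_mul, map_pow, map_natCast, map_one, eval_u, eval_v, pD_zero, mul_add,
    mul_one, zero_add, Nat.cast_add, Nat.cast_one, Nat.cast_ofNat, Nat.add_sub_cancel,
    Nat.reduceSubDiff, Nat.add_one_sub_one, pow_one, map_ofNat (eval f x) 2]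
  ring

lemma ofReal_VtildeStar (hp : 1 ≤ p) (hh : 1 ≤ h) : (VtildeStar p k h f.1 : ℂ) =
    -imIntegral (dt (u (k - h) * v (k - h) * u (2 * h - 2) * pw (p - 1) p)) f := by
  obtain ⟨q, rfl⟩ := Nat.exists_eq_add_of_le' hp
  obtain ⟨l, rfl⟩ := Nat.exists_eq_add_of_le' hh
  rw [imIntegral_apply, ← Complex.ofReal_neg, ← re_tInt_I_mul_eval, VtildeStar]
  congr 3 with x
  simp only [pw, Derivation.leibniz, Derivation.leibniz_pow, dt_u, dt_v, smul_eq_mul, nsmul_eq_mul,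
    map_add, map_neg, map_mul, map_pow, map_natCast, map_one, eval_u, eval_v, pD_zero, mul_add,
    mul_one, zero_add, Nat.cast_add, Nat.cast_one, Nat.add_sub_cancel, Nat.reduceSubDiff]
  rcases q with _ | q
  · simp only [Nat.cast_zero]
    ring
  · simp only [Nat.add_one_sub_one, Nat.cast_add, Nat.cast_one]
    ring

lemma ofReal_WtildeStar (hp : 1 ≤ p) (hh : 1 ≤ h) (hk : h < k) : (WtildeStar p k h f.1 : ℂ) =
    -imIntegral (dt (u (k - h) * v (k - h - 1) * u (2 * h - 1) * pw (p - 1) p)) f := by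
  obtain ⟨q, rfl⟩ := Nat.exists_eq_add_of_le' hp
  obtain ⟨l, rfl⟩ := Nat.exists_eq_add_of_le' hh
  obtain ⟨m, rfl⟩ := Nat.exists_eq_add_of_lt hk
  rw [imIntegral_apply, ← Complex.ofReal_neg, ← re_tInt_I_mul_eval, WtildeStar]
  congr 3 with x
  simp only [pw, Derivation.leibniz, Derivation.leibniz_pow, dt_u, dt_v, smul_eq_mul, nsmul_eq_mul,
    map_add, map_neg, map_mul, map_pow, map_natCast, map_one, eval_u, eval_v, pD_zero, mul_add,
    mul_one, zero_add, Nat.cast_add, Nat.cast_one, Nat.add_sub_cancel_left, Nat.reduceSubDiff,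
    Nat.add_one_sub_one, add_assoc _ m]
  ring

end Densities

lemma ItildeStar_one_sModEq {k : ℕ} (hp : 2 ≤ p) (hk : 1 < k) :
    (fun f : SPfun => Complex.ofReal (ItildeStar p k 1 f.1)) ≡
      (fun f : SPfun => Complex.ofReal
        (2 * IdenR p k 0 f.1 - 2 * ((p : ℝ) - 1) * IdenR p k 1 f.1)) [SMOD omegaSpan p k] := by
  obtain ⟨q, rfl⟩ := Nat.exists_eq_add_of_le' hp
  obtain ⟨j, rfl⟩ := Nat.exists_eq_add_of_le' hk.le
  convert (imIntegral_sModEq <|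
    dt_u_sq_mul_pw_sModEq (j := j) (a := q + 1) (by omega) rfl rfl).neg using 1
  · funext f
    simp only [ofReal_ItildeStar f hp le_rfl, Pi.neg_apply, mul_one, Nat.sub_self,
      Nat.add_sub_cancel, mul_assoc, u_zero_mul_pw]
  · funext f
    simp only [map_add, map_neg, imIntegral_nsmul_apply, Pi.neg_apply, Pi.add_apply,
      ofReal_IdenR, Complex.ofReal_sub, Complex.ofReal_mul, Nat.sub_zero, Nat.add_sub_cancel,
      mul_zero, mul_one, mul_assoc, u_zero_mul_pw]
    push_cast
    ring

lemma VtildeStar_one_sModEq {k : ℕ} (hp : 1 ≤ p) (hk : 1 < k) :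
    (fun f : SPfun => Complex.ofReal (VtildeStar p k 1 f.1)) ≡
      (fun f : SPfun => Complex.ofReal (4 * (p : ℝ) * VdenR p k 0 f.1))
      [SMOD omegaSpan p k] := by
  obtain ⟨q, rfl⟩ := Nat.exists_eq_add_of_le' hp
  obtain ⟨j, rfl⟩ := Nat.exists_eq_add_of_le' hk.le
  convert (imIntegral_sModEq <| dt_u_mul_v_mul_pw_sModEq (j := j) (by omega)).neg using 1
  · funext f
    simp only [ofReal_VtildeStar f hp le_rfl, Pi.neg_apply, mul_one, Nat.sub_self,
      Nat.add_sub_cancel, mul_assoc, u_zero_mul_pw]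
  · funext f
    simp only [map_neg, imIntegral_nsmul_apply, Pi.neg_apply, ofReal_VdenR,
      Complex.ofReal_mul, Nat.sub_zero, Nat.add_sub_cancel, mul_zero, zero_add, neg_neg]
    push_cast
    ring

lemma WtildeStar_one_sModEq {k : ℕ} (hp : 1 ≤ p) (hk : 2 < k) :
    (fun f : SPfun => Complex.ofReal (WtildeStar p k 1 f.1)) ≡
      (fun f : SPfun => Complex.ofReal
        (2 * VdenR p k 0 f.1 - 2 * WdenR p k 0 f.1 - 2 * VdenR p k 1 f.1))
      [SMOD omegaSpan p k] := by
  obtain ⟨q, rfl⟩ := Nat.exists_eq_add_of_le' hp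
  obtain ⟨j, rfl⟩ := Nat.exists_eq_add_of_le' hk.le
  convert (imIntegral_sModEq <|
    dt_u_mul_v_mul_u_one_mul_pw_sModEq (j := j) (a := q) (by omega) rfl).neg using 1
  · funext f
    rw [ofReal_WtildeStar f hp le_rfl (by omega)]
    rfl
  · funext f
    simp only [map_add, map_neg, imIntegral_nsmul_apply, Pi.neg_apply, Pi.add_apply,
      ofReal_VdenR, ofReal_WdenR, Complex.ofReal_sub, Complex.ofReal_mul, Nat.sub_zero,
      Nat.add_one_sub_one, mul_zero, zero_add, mul_one]
    push_cast
    ring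

end DiffPoly

theorem star_identities_h_one_general (p k : ℕ) (hp : 1 ≤ p) (hk : 1 < k) :
    (2 ≤ p →
      (fun f : SPfun => Complex.ofReal (ItildeStar p k 1 f.1)) ≡
        (fun f => Complex.ofReal
          (2 * IdenR p k 0 f.1 - 2 * ((p : ℝ) - 1) * IdenR p k 1 f.1))
        [SMOD omegaSpan p k]) ∧
    (fun f : SPfun => Complex.ofReal (VtildeStar p k 1 f.1)) ≡
      (fun f => Complex.ofReal (4 * (p : ℝ) * VdenR p k 0 f.1)) [SMOD omegaSpan p k] ∧
    (2 < k →
      (fun f : SPfun => Complex.ofReal (WtildeStar p k 1 f.1)) ≡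
        (fun f => Complex.ofReal
          (2 * VdenR p k 0 f.1 - 2 * WdenR p k 0 f.1 - 2 * VdenR p k 1 f.1))
        [SMOD omegaSpan p k]) :=
  ⟨fun hp2 => DiffPoly.ItildeStar_one_sModEq hp2 hk, DiffPoly.VtildeStar_one_sModEq hp hk,
    fun hk2 => DiffPoly.WtildeStar_one_sModEq hp hk2⟩

/-- Lemma 3.2: the identities for `Ĩ*_{k,1}`, `Ṽ*_{k,1}` and (for `k > 2`) `W̃*_{k,1}`
modulo `Ω_k + Θ_k`. -/
theorem star_identities_h_one (p k : ℕ) (hp : 2 ≤ p) (hk : 1 < k) :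
    EquivMod p k (fun f => Complex.ofReal (ItildeStar p k 1 f.1))
      (fun f => Complex.ofReal
        (2 * IdenR p k 0 f.1 - 2 * ((p : ℝ) - 1) * IdenR p k 1 f.1)) ∧
    EquivMod p k (fun f => Complex.ofReal (VtildeStar p k 1 f.1))
      (fun f => Complex.ofReal (4 * (p : ℝ) * VdenR p k 0 f.1)) ∧
    (2 < k →
      EquivMod p k (fun f => Complex.ofReal (WtildeStar p k 1 f.1))
        (fun f => Complex.ofReal
          (2 * VdenR p k 0 f.1 - 2 * WdenR p k 0 f.1 - 2 * VdenR p k 1 f.1))) := by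
  obtain ⟨hI, hV, hW⟩ := star_identities_h_one_general p k (by omega) hk
  exact ⟨.of_sModEq_omegaSpan (hI hp), .of_sModEq_omegaSpan hV,
    fun hk2 => .of_sModEq_omegaSpan (hW hk2)⟩
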